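/- Let c satisfy [H1] and [H2]. For each real k ≠ 0 let u₁(·,k), u₂(·,k) be the Jost solutions at k and let T(k), R₁(k), R₂(k) be the scattering coefficients, i.e., the unique complex numbers with T(k) ≠ 0 such that u₂(·,k) = (R₁(k)/T(k)) u₁(·,k) + (1/T(k)) conj(u₁(·,k)) and u₁(·,k) = (R₂(k)/T(k)) u₂(·,k) + (1/T(k)) conj(u₂(·,k)). Then there exists a constant C' > 0, independent of k, such that |R₂(k)| ≤ C'|k| for all real k ≠ 0, and lim_{k→0, k∈ℝ\{0}} R₂(k)/k = (1/(2i)) ∫_ℝ q(t) dt, where q = 1 − 1/c². -/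

import Mathlib

open MeasureTheory Filter Topology

noncomputable section

/-- Hypothesis [H1]: `c` is essentially bounded below away from `0` and bounded above. -/
def HypH1 (c : ℝ → ℝ) : Prop :=
  ∃ c₀ > (0 : ℝ), ∃ cM > (0 : ℝ), ∀ᵐ x : ℝ, c₀ < c x ∧ c x ≤ cM

/-- Hypothesis [H1] with explicit constants `c₀`, `cM`. -/
def HypH1c (c : ℝ → ℝ) (c₀ cM : ℝ) : Prop :=
  0 < c₀ ∧ 0 < cM ∧ ∀ᵐ x : ℝ, c₀ < c x ∧ c x ≤ cM

/-- Hypothesis [H2]: `|c(x) - 1| ≤ C ⟨x⟩^{-1-δ}` almost everywhere. -/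
def HypH2 (c : ℝ → ℝ) : Prop :=
  ∃ C > (0 : ℝ), ∃ δ > (0 : ℝ),
    ∀ᵐ x : ℝ, |c x - 1| ≤ C * (1 + x ^ 2) ^ (-(1 + δ) / 2)

/-- `u` is continuously differentiable, its derivative is locally absolutely continuous,
and `u'' + (k²/c²) u = 0` holds almost everywhere (equivalently, the integral formulation
of the second-order equation holds). -/
def SolvesHelmholtz (c : ℝ → ℝ) (k : ℂ) (u : ℝ → ℂ) : Prop :=
  ContDiff ℝ 1 u ∧
  ∀ a b : ℝ, deriv u b = deriv u a + ∫ x in a..b, -(k ^ 2 / ((c x : ℂ) ^ 2)) * u x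

/-- The Jost solution from `+∞` at `k` : `e^{-ikx} u(x) → 1` as `x → +∞`. -/
def IsJostPlus (c : ℝ → ℝ) (k : ℂ) (u : ℝ → ℂ) : Prop :=
  SolvesHelmholtz c k u ∧
  Tendsto (fun x : ℝ => Complex.exp (-(Complex.I * k * (x : ℂ))) * u x) atTop (𝓝 1)

/-- The Jost solution from `-∞` at `k` : `e^{ikx} u(x) → 1` as `x → -∞`. -/
def IsJostMinus (c : ℝ → ℝ) (k : ℂ) (u : ℝ → ℂ) : Prop :=
  SolvesHelmholtz c k u ∧
  Tendsto (fun x : ℝ => Complex.exp (Complex.I * k * (x : ℂ)) * u x) atBot (𝓝 1)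

/-- `q = 1 - 1/c²`. -/
def qfun (c : ℝ → ℝ) (x : ℝ) : ℝ := 1 - 1 / (c x) ^ 2

/-- `Q = 1 - 1/c`. -/
def Qfun (c : ℝ → ℝ) (x : ℝ) : ℝ := 1 - 1 / c x

/-!
Variation of constants writes `u₁ = A₊ e^{ikx} + A₋ e^{-ikx}` with
`A±' = ±(k / 2i) e^{∓ikx} q u₁`, `A₊ → 1`, `A₋ → 0` at `+∞` and `A₊ → t = 1 / T`,
`A₋ → r = R₂ / T` at `-∞`. Two facts then suffice.

* The flux `|A₊|² - |A₋|² = Im (u₁' ū₁) / k` is constant, so `|t|² = 1 + |r|²`; hence `|R₂| ≤ 1` and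
  `|R₂| ≤ |r|`.
* Integrating `A±'` over the line expresses `1 - t` and `r` as `k` times integrals of `q u₁`. If
  `|k| ∫ |q| ≤ 1 / 2`, then the integral equation absorbs `sup |u₁|` and gives `|u₁| ≤ 2`, so
  `|r| ≤ |k| ∫ |q|`. Moreover `u₁ → 1` pointwise as `k → 0`, and dominated convergence gives the
  limit of `r / k`.
-/

open scoped ComplexConjugate

section IndefiniteIntegral

variable {E F 𝕜 : Type*} [NormedAddCommGroup E] [NormedSpace ℝ E] [NormedAddCommGroup F]
  [NormedSpace ℝ F] [RCLike 𝕜]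

theorem absolutelyContinuousOnInterval_intervalIntegral {f : ℝ → E} {a b : ℝ}
    (hf : ∀ a b : ℝ, IntervalIntegrable f volume a b) :
    AbsolutelyContinuousOnInterval (fun x ↦ ∫ t in a..x, f t) a b := by
  have hnorm : AbsolutelyContinuousOnInterval (fun x ↦ ∫ t in a..x, ‖f t‖) a b :=
    (hf a b).norm.absolutelyContinuousOnInterval_intervalIntegral (by simp)
  refine squeeze_zero (fun _ ↦ Finset.sum_nonneg fun _ _ ↦ dist_nonneg)
    (fun _ ↦ Finset.sum_le_sum fun i _ ↦ ?_) hnorm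
  rw [dist_eq_norm, dist_eq_norm, intervalIntegral.integral_interval_sub_left (hf ..) (hf ..),
    intervalIntegral.integral_interval_sub_left (hf ..).norm (hf ..).norm]
  exact intervalIntegral.norm_integral_le_abs_integral_norm

/-- `P` is an indefinite integral of `f`: the integral form of the condition that `P` is locally
absolutely continuous with derivative `f` almost everywhere. Local integrability of `f` is part of
the definition because otherwise the integrals would take the value `0`. -/
structure IsIndefiniteIntegral (P f : ℝ → E) : Prop where
  intervalIntegrable : ∀ a b : ℝ, IntervalIntegrable f volume a b
  sub_eq_integral : ∀ a b : ℝ, P b - P a = ∫ x in a..b, f x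

namespace IsIndefiniteIntegral

variable {f g P Q : ℝ → E}

theorem eq_add_integral (h : IsIndefiniteIntegral P f) (a x : ℝ) :
    P x = P a + ∫ t in a..x, f t :=
  sub_eq_iff_eq_add'.1 (h.sub_eq_integral a x)

theorem absolutelyContinuousOnInterval (h : IsIndefiniteIntegral P f) (a b : ℝ) :
    AbsolutelyContinuousOnInterval P a b := by
  rw [funext (h.eq_add_integral a)]
  exact contDiff_const.contDiffOn.absolutelyContinuousOnInterval.fun_add
    (absolutelyContinuousOnInterval_intervalIntegral h.intervalIntegrable)

theorem continuous (h : IsIndefiniteIntegral P f) : Continuous P := by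
  rw [funext (h.eq_add_integral 0)]
  exact continuous_const.add (intervalIntegral.continuous_primitive h.intervalIntegrable 0)

theorem ae_hasDerivAt [CompleteSpace E] (h : IsIndefiniteIntegral P f) (a b : ℝ) :
    ∀ᵐ x, x ∈ Set.uIcc a b → HasDerivAt P (f x) x := by
  rw [funext (h.eq_add_integral a)]
  filter_upwards [(h.intervalIntegrable a b).ae_hasDerivAt_integral] with x hx hxab
  exact (hx hxab a Set.left_mem_uIcc).const_add _

theorem of_hasDerivAt [CompleteSpace E] (hP : ∀ x, HasDerivAt P (f x) x)
    (hf : Continuous f) : IsIndefiniteIntegral P f where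
  intervalIntegrable := hf.intervalIntegrable
  sub_eq_integral a b := (intervalIntegral.integral_eq_sub_of_hasDerivAt (fun x _ ↦ hP x)
    (hf.intervalIntegrable a b)).symm

theorem add (hP : IsIndefiniteIntegral P f) (hQ : IsIndefiniteIntegral Q g) :
    IsIndefiniteIntegral (fun x ↦ P x + Q x) (fun x ↦ f x + g x) where
  intervalIntegrable a b := (hP.intervalIntegrable a b).add (hQ.intervalIntegrable a b)
  sub_eq_integral a b := by
    rw [intervalIntegral.integral_add (hP.intervalIntegrable a b) (hQ.intervalIntegrable a b),
      ← hP.sub_eq_integral, ← hQ.sub_eq_integral]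
    abel

theorem comp_clm [CompleteSpace E] [CompleteSpace F] (L : E →L[ℝ] F)
    (h : IsIndefiniteIntegral P f) : IsIndefiniteIntegral (fun x ↦ L (P x)) (fun x ↦ L (f x)) where
  intervalIntegrable a b :=
    ⟨L.integrable_comp (h.intervalIntegrable a b).1, L.integrable_comp (h.intervalIntegrable a b).2⟩
  sub_eq_integral a b := by
    rw [L.intervalIntegral_comp_comm (h.intervalIntegrable a b), ← h.sub_eq_integral, map_sub]

theorem mul {f g P Q : ℝ → 𝕜} (hP : IsIndefiniteIntegral P f) (hQ : IsIndefiniteIntegral Q g) :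
    IsIndefiniteIntegral (fun x ↦ P x * Q x) (fun x ↦ f x * Q x + P x * g x) := by
  have hint (a b : ℝ) : IntervalIntegrable (fun x ↦ f x * Q x + P x * g x) volume a b :=
    ((hP.intervalIntegrable a b).mul_continuousOn hQ.continuous.continuousOn).add
      ((hQ.intervalIntegrable a b).continuousOn_mul hP.continuous.continuousOn)
  refine ⟨hint, fun a b ↦ ?_⟩
  have hR : IsIndefiniteIntegral (fun x ↦ ∫ t in a..x, f t * Q t + P t * g t)
      (fun x ↦ f x * Q x + P x * g x) :=
    ⟨hint, fun _ _ ↦ intervalIntegral.integral_interval_sub_left (hint ..) (hint ..)⟩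
  have hAC : AbsolutelyContinuousOnInterval
      (fun x ↦ P x * Q x - ∫ t in a..x, f t * Q t + P t * g t) a b :=
    ((hP.absolutelyContinuousOnInterval a b).fun_smul
      (hQ.absolutelyContinuousOnInterval a b)).fun_sub (hR.absolutelyContinuousOnInterval a b)
  obtain ⟨C, hC⟩ := hAC.const_of_ae_hasDerivAt_zero (by
    filter_upwards [hP.ae_hasDerivAt a b, hQ.ae_hasDerivAt a b, hR.ae_hasDerivAt a b]
      with x hPx hQx hRx hx
    exact (((hPx hx).mul (hQx hx)).sub (hRx hx)).congr_deriv (sub_self _))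
  have hab := (hC b Set.right_mem_uIcc).trans (hC a Set.left_mem_uIcc).symm
  rw [intervalIntegral.integral_same] at hab
  linear_combination hab

theorem tendsto_atTop (h : IsIndefiniteIntegral P f) (hf : Integrable f) (a : ℝ) :
    Tendsto P atTop (𝓝 (P a + ∫ x in Set.Ioi a, f x)) := by
  rw [funext (h.eq_add_integral a)]
  simpa using (intervalIntegral_tendsto_integral_Ioi a hf.integrableOn tendsto_id).const_add (P a)

theorem tendsto_atBot (h : IsIndefiniteIntegral P f) (hf : Integrable f) (b : ℝ) :
    Tendsto P atBot (𝓝 (P b - ∫ x in Set.Iic b, f x)) := by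
  refine ((intervalIntegral_tendsto_integral_Iic b hf.integrableOn tendsto_id).const_sub
    (P b)).congr fun a ↦ ?_
  rw [id, ← h.sub_eq_integral, sub_sub_cancel]

theorem norm_sub_le_integral_norm {p : E} (h : IsIndefiniteIntegral P f)
    (hf : Integrable f) (hp : Tendsto P atTop (𝓝 p)) (x : ℝ) : ‖P x - p‖ ≤ ∫ t, ‖f t‖ := by
  rw [tendsto_nhds_unique hp (h.tendsto_atTop hf x), sub_add_cancel_left, norm_neg]
  exact (norm_integral_le_integral_norm _).trans
    (setIntegral_le_integral hf.norm (.of_forall fun _ ↦ norm_nonneg _))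

theorem sub_eq_integral_of_tendsto {m p : E} (h : IsIndefiniteIntegral P f)
    (hf : Integrable f) (hm : Tendsto P atBot (𝓝 m)) (hp : Tendsto P atTop (𝓝 p)) :
    p - m = ∫ x, f x := by
  rw [tendsto_nhds_unique hp (h.tendsto_atTop hf 0), tendsto_nhds_unique hm (h.tendsto_atBot hf 0),
    ← intervalIntegral.integral_Iic_add_Ioi hf.integrableOn hf.integrableOn]
  abel

end IsIndefiniteIntegral

end IndefiniteIntegral

section PlaneWave

/-- The plane wave `e^{ikx}`; its complex conjugate is `planeWave (-k)`. -/
def planeWave (k x : ℝ) : ℂ := Complex.exp (Complex.I * k * x)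

theorem norm_planeWave (k x : ℝ) : ‖planeWave k x‖ = 1 := by
  simp [planeWave, Complex.norm_exp]

theorem planeWave_neg_mul_planeWave (k x : ℝ) : planeWave (-k) x * planeWave k x = 1 := by
  simp [planeWave, ← Complex.exp_add]

theorem conj_planeWave (k x : ℝ) : conj (planeWave k x) = planeWave (-k) x := by
  simp [planeWave, ← Complex.exp_conj]

theorem hasDerivAt_planeWave (k x : ℝ) :
    HasDerivAt (planeWave k) (Complex.I * k * planeWave k x) x :=
  (Complex.ofRealCLM.hasDerivAt.const_mul (Complex.I * k)).cexp.congr_deriv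
    (by simp [planeWave, mul_comm])

theorem continuous_planeWave (k : ℝ) : Continuous (planeWave k) := by
  unfold planeWave; fun_prop

theorem tendsto_planeWave_nhdsNE_zero (x : ℝ) :
    Tendsto (fun k ↦ planeWave k x) (𝓝[≠] 0) (𝓝 1) := by
  have h : Continuous fun k ↦ planeWave k x := by unfold planeWave; fun_prop
  simpa [planeWave] using (h.tendsto 0).mono_left nhdsWithin_le_nhds

theorem planeWave_add_quarter_period {k : ℝ} (hk : k ≠ 0) (x : ℝ) :
    planeWave k (x + Real.pi / (2 * k)) = Complex.I * planeWave k x := by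
  have hkℂ : (k : ℂ) ≠ 0 := by exact_mod_cast hk
  have hphase : Complex.I * k * (x + Real.pi / (2 * k) : ℝ) =
      Real.pi / 2 * Complex.I + Complex.I * k * x := by
    push_cast
    field_simp
    ring
  rw [planeWave, hphase, Complex.exp_add, Complex.exp_pi_div_two_mul_I, planeWave]

end PlaneWave

section WaveAsymptotics

/-- `u` is asymptotic to the superposition `a e^{ikx} + b e^{-ikx}` of plane waves along `l`, which
is `atTop` or `atBot` in the applications. -/
def HasWaveAsymptotics (k : ℝ) (a b : ℂ) (u : ℝ → ℂ) (l : Filter ℝ) : Prop :=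
  Tendsto (fun x ↦ u x - (a * planeWave k x + b * planeWave (-k) x)) l (𝓝 0)

theorem eq_zero_of_tendsto_waves {k : ℝ} {a b : ℂ} {l : Filter ℝ} [l.NeBot] (hk : k ≠ 0)
    (hl : ∀ s : ℝ, Tendsto (· + s) l l)
    (h : Tendsto (fun x ↦ a * planeWave k x + b * planeWave (-k) x) l (𝓝 0)) : a = 0 := by
  -- Shifting by a quarter period multiplies the two waves by `i` and `-i`, which separates them.
  have hshift := (h.comp (hl (Real.pi / (2 * k)))).const_mul Complex.I
  have hwave : Tendsto (fun x ↦ 2 * a * planeWave k x) l (𝓝 0) := by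
    have hsub := h.sub hshift
    rw [mul_zero, sub_zero] at hsub
    refine hsub.congr fun x ↦ ?_
    have hneg := planeWave_add_quarter_period (neg_ne_zero.2 hk) (x + Real.pi / (2 * k))
    rw [mul_neg, div_neg, add_neg_cancel_right] at hneg
    simp only [Function.comp, planeWave_add_quarter_period hk]
    linear_combination b * hneg - a * planeWave k x * Complex.I_sq
  have hnorm := tendsto_zero_iff_norm_tendsto_zero.1 hwave
  simp only [norm_mul, norm_planeWave, mul_one] at hnorm
  simpa using tendsto_nhds_unique tendsto_const_nhds hnorm

namespace HasWaveAsymptotics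

variable {k : ℝ} {a b a' b' : ℂ} {u v : ℝ → ℂ} {l : Filter ℝ}

theorem neg (h : HasWaveAsymptotics k a b u l) : HasWaveAsymptotics (-k) b a u l := by
  simpa only [HasWaveAsymptotics, neg_neg, add_comm] using h

theorem add (hu : HasWaveAsymptotics k a b u l) (hv : HasWaveAsymptotics k a' b' v l) :
    HasWaveAsymptotics k (a + a') (b + b') (fun x ↦ u x + v x) l := by
  have h := Tendsto.add hu hv
  rw [add_zero] at h
  exact h.congr fun x ↦ by ring

theorem const_mul (z : ℂ) (h : HasWaveAsymptotics k a b u l) :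
    HasWaveAsymptotics k (z * a) (z * b) (fun x ↦ z * u x) l := by
  have h := Tendsto.const_mul z h
  rw [mul_zero] at h
  exact h.congr fun x ↦ by ring

theorem star (h : HasWaveAsymptotics k a b u l) :
    HasWaveAsymptotics k (conj b) (conj a) (fun x ↦ conj (u x)) l := by
  have h := (Complex.continuous_conj.tendsto 0).comp h
  rw [map_zero] at h
  refine h.congr fun x ↦ ?_
  simp only [Function.comp, map_sub, map_add, map_mul, conj_planeWave, neg_neg]
  ring

theorem left_unique [l.NeBot] (hk : k ≠ 0) (hl : ∀ s : ℝ, Tendsto (· + s) l l)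
    (h : HasWaveAsymptotics k a b u l) (h' : HasWaveAsymptotics k a' b' u l) : a = a' := by
  have hsub := Tendsto.sub h' h
  rw [sub_zero] at hsub
  refine sub_eq_zero.1 (eq_zero_of_tendsto_waves (b := b - b') hk hl ?_)
  exact hsub.congr fun x ↦ by ring

theorem eventually_norm_le (h : HasWaveAsymptotics k a b u l) :
    ∀ᶠ x in l, ‖u x‖ ≤ 1 + (‖a‖ + ‖b‖) := by
  filter_upwards [h.norm.eventually_le_const (u := 1) (by simp)] with x hx
  calc ‖u x‖ = ‖u x - (a * planeWave k x + b * planeWave (-k) x) +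
        (a * planeWave k x + b * planeWave (-k) x)‖ := by rw [sub_add_cancel]
    _ ≤ 1 + (‖a * planeWave k x‖ + ‖b * planeWave (-k) x‖) :=
        (norm_add_le _ _).trans (add_le_add hx (norm_add_le _ _))
    _ = 1 + (‖a‖ + ‖b‖) := by simp only [norm_mul, norm_planeWave, mul_one]

theorem exists_norm_le (hu : Continuous u) (htop : HasWaveAsymptotics k a b u atTop)
    (hbot : HasWaveAsymptotics k a' b' u atBot) : ∃ M, ∀ x, ‖u x‖ ≤ M := by
  obtain ⟨y, hy⟩ := eventually_atTop.1 htop.eventually_norm_le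
  obtain ⟨x, hx⟩ := eventually_atBot.1 hbot.eventually_norm_le
  obtain ⟨M, hM⟩ := (isCompact_Icc (a := x) (b := y)).exists_bound_of_continuousOn hu.continuousOn
  refine ⟨max M (max (1 + (‖a‖ + ‖b‖)) (1 + (‖a'‖ + ‖b'‖))), fun z ↦ ?_⟩
  rcases le_total y z with hyz | hzy
  · exact (hy z hyz).trans (by simp)
  rcases le_total z x with hzx | hxz
  · exact (hx z hzx).trans (by simp)
  · exact (hM z ⟨hxz, hzy⟩).trans (by simp)

end HasWaveAsymptotics

theorem IsJostPlus.hasWaveAsymptotics {c : ℝ → ℝ} {k : ℝ} {u : ℝ → ℂ} (h : IsJostPlus c k u) :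
    HasWaveAsymptotics k 1 0 u atTop := by
  have h0 := tendsto_zero_iff_norm_tendsto_zero.1 (tendsto_sub_nhds_zero_iff.2 h.2)
  refine tendsto_zero_iff_norm_tendsto_zero.2 (h0.congr fun x ↦ ?_)
  have hexp : Complex.exp (-(Complex.I * k * x)) = planeWave (-k) x := by simp [planeWave]
  rw [← one_mul ‖_ - 1‖, ← norm_planeWave k x, ← norm_mul, hexp]
  congr 1
  linear_combination u x * planeWave_neg_mul_planeWave k x

theorem IsJostMinus.hasWaveAsymptotics {c : ℝ → ℝ} {k : ℝ} {u : ℝ → ℂ} (h : IsJostMinus c k u) :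
    HasWaveAsymptotics k 0 1 u atBot := by
  have h0 := tendsto_zero_iff_norm_tendsto_zero.1 (tendsto_sub_nhds_zero_iff.2 h.2)
  refine tendsto_zero_iff_norm_tendsto_zero.2 (h0.congr fun x ↦ ?_)
  rw [← one_mul ‖_ - 1‖, ← norm_planeWave (-k) x, ← norm_mul, ← planeWave]
  congr 1
  linear_combination u x * planeWave_neg_mul_planeWave k x

end WaveAsymptotics

section WaveAmplitude

/-- The coefficient of `e^{ikx}` when the Cauchy data of `u` at `x` are matched by a superposition
of `e^{ikx}` and `e^{-ikx}` (variation of constants); that of `e^{-ikx}` is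
`waveAmplitude (-k) u x`. -/
def waveAmplitude (k : ℝ) (u : ℝ → ℂ) (x : ℝ) : ℂ :=
  planeWave (-k) x * (deriv u x + Complex.I * k * u x) / (2 * Complex.I * k)

/-- The density `(k / 2i) e^{-ikx} q(x) u(x)`, the derivative of `waveAmplitude k u` when `u` solves
the Helmholtz equation. -/
def scatteringDensity (c : ℝ → ℝ) (k : ℝ) (u : ℝ → ℂ) (x : ℝ) : ℂ :=
  k / (2 * Complex.I) * (planeWave (-k) x * (qfun c x * u x))

variable {c : ℝ → ℝ} {k : ℝ} {u : ℝ → ℂ}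

theorem waveAmplitude_mul_add (hk : k ≠ 0) (u : ℝ → ℂ) (x : ℝ) :
    waveAmplitude k u x * planeWave k x + waveAmplitude (-k) u x * planeWave (-k) x = u x := by
  have hkℂ : (k : ℂ) ≠ 0 := by exact_mod_cast hk
  have hI := Complex.I_ne_zero
  rw [waveAmplitude, waveAmplitude, neg_neg]
  push_cast
  field_simp
  linear_combination 2 * Complex.I * k * u x * planeWave_neg_mul_planeWave k x

theorem sq_norm_waveAmplitude_sub (hk : k ≠ 0) (u : ℝ → ℂ) (x : ℝ) :
    ‖waveAmplitude k u x‖ ^ 2 - ‖waveAmplitude (-k) u x‖ ^ 2 =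
      (deriv u x * conj (u x)).im / k := by
  have hsq (κ : ℝ) : ‖waveAmplitude κ u x‖ ^ 2 =
      Complex.normSq (deriv u x + Complex.I * κ * u x) / (4 * κ ^ 2) := by
    rw [Complex.sq_norm, waveAmplitude, map_div₀, map_mul, ← Complex.sq_norm (planeWave _ _),
      norm_planeWave]
    simp only [map_mul, Complex.normSq_I, Complex.normSq_ofNat, Complex.normSq_ofReal]
    ring
  rw [hsq, hsq]
  simp only [Complex.normSq_apply, Complex.add_re, Complex.add_im, Complex.mul_re, Complex.mul_im,
    Complex.I_re, Complex.I_im, Complex.ofReal_re, Complex.ofReal_im, Complex.conj_re,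
    Complex.conj_im]
  field_simp
  ring

theorem hasWaveAsymptotics_of_tendsto_waveAmplitude {l : Filter ℝ} {p m : ℂ} (hk : k ≠ 0)
    (hp : Tendsto (waveAmplitude k u) l (𝓝 p)) (hm : Tendsto (waveAmplitude (-k) u) l (𝓝 m)) :
    HasWaveAsymptotics k p m u l := by
  have hz {κ : ℝ} {z : ℂ} (h : Tendsto (waveAmplitude κ u) l (𝓝 z)) :
      Tendsto (fun x ↦ (waveAmplitude κ u x - z) * planeWave κ x) l (𝓝 0) := by
    rw [tendsto_zero_iff_norm_tendsto_zero]
    simpa [norm_planeWave] using (tendsto_sub_nhds_zero_iff.2 h).norm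
  have h := (hz hp).add (hz hm)
  rw [add_zero] at h
  exact h.congr fun x ↦ by linear_combination waveAmplitude_mul_add hk u x

theorem HasWaveAsymptotics.tendsto_waveAmplitude {l : Filter ℝ} [l.NeBot] {a b p m : ℂ}
    (h : HasWaveAsymptotics k a b u l) (hk : k ≠ 0) (hl : ∀ s : ℝ, Tendsto (· + s) l l)
    (hp : Tendsto (waveAmplitude k u) l (𝓝 p)) (hm : Tendsto (waveAmplitude (-k) u) l (𝓝 m)) :
    Tendsto (waveAmplitude k u) l (𝓝 a) ∧ Tendsto (waveAmplitude (-k) u) l (𝓝 b) := by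
  have hpm := hasWaveAsymptotics_of_tendsto_waveAmplitude hk hp hm
  rw [h.left_unique hk hl hpm, h.neg.left_unique (neg_ne_zero.2 hk) hl hpm.neg]
  exact ⟨hp, hm⟩

namespace SolvesHelmholtz

theorem neg (hu : SolvesHelmholtz c k u) : SolvesHelmholtz c (-k : ℝ) u := by
  simpa [SolvesHelmholtz] using hu

theorem isIndefiniteIntegral (hu : SolvesHelmholtz c k u) : IsIndefiniteIntegral u (deriv u) :=
  .of_hasDerivAt (fun x ↦ (hu.1.differentiable one_ne_zero x).hasDerivAt)
    (hu.1.continuous_deriv le_rfl)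

theorem isIndefiniteIntegral_deriv (hu : SolvesHelmholtz c k u) (hq : Integrable (qfun c)) :
    IsIndefiniteIntegral (deriv u) (fun x ↦ -(k ^ 2 * (1 - qfun c x)) * u x) where
  intervalIntegrable a b := by
    have hcoeff : IntervalIntegrable (fun x ↦ -((k : ℂ) ^ 2 * (1 - qfun c x))) volume a b :=
      ((intervalIntegrable_const.sub hq.ofReal.intervalIntegrable).const_mul _).neg
    exact hcoeff.mul_continuousOn hu.1.continuous.continuousOn
  sub_eq_integral a b := by
    rw [hu.2 a b, add_sub_cancel_left]
    congr 1 with x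
    simp [qfun, div_eq_mul_inv]

theorem isIndefiniteIntegral_waveAmplitude (hu : SolvesHelmholtz c k u) (hk : k ≠ 0)
    (hq : Integrable (qfun c)) :
    IsIndefiniteIntegral (waveAmplitude k u) (scatteringDensity c k u) := by
  have hkℂ : (k : ℂ) ≠ 0 := by exact_mod_cast hk
  have hI := Complex.I_ne_zero
  have hwave : IsIndefiniteIntegral (planeWave (-k)) fun x ↦ Complex.I * ↑(-k) * planeWave (-k) x :=
    .of_hasDerivAt (hasDerivAt_planeWave (-k)) (continuous_const.mul (continuous_planeWave _))
  have h := (hwave.mul ((hu.isIndefiniteIntegral_deriv hq).add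
    (hu.isIndefiniteIntegral.comp_clm (.mul ℝ ℂ (Complex.I * k))))).comp_clm
      (.mul ℝ ℂ (2 * Complex.I * k)⁻¹)
  convert h using 2 with x x
  · simp [waveAmplitude, div_eq_inv_mul]
  · simp only [scatteringDensity, ContinuousLinearMap.mul_apply']
    push_cast
    field_simp
    linear_combination (k * planeWave (-k) x * u x) * Complex.I_sq

theorem im_deriv_mul_conj_eq (hu : SolvesHelmholtz c k u) (hq : Integrable (qfun c)) (x y : ℝ) :
    (deriv u x * conj (u x)).im = (deriv u y * conj (u y)).im := by
  have h := (((hu.isIndefiniteIntegral_deriv hq).mul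
    (hu.isIndefiniteIntegral.comp_clm Complex.conjCLE)).comp_clm Complex.imCLM).sub_eq_integral y x
  have hzero (z : ℝ) : (-((k : ℂ) ^ 2 * (1 - qfun c z)) * u z * conj (u z) +
      deriv u z * conj (deriv u z)).im = 0 := by
    rw [mul_assoc, Complex.mul_conj, Complex.mul_conj]
    norm_cast
  simp only [ContinuousLinearEquiv.coe_coe, Complex.conjCLE_apply, Complex.imCLM_apply, hzero,
    intervalIntegral.integral_zero] at h
  exact sub_eq_zero.1 h

end SolvesHelmholtz

theorem norm_scatteringDensity (c : ℝ → ℝ) (k : ℝ) (u : ℝ → ℂ) (x : ℝ) :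
    ‖scatteringDensity c k u x‖ = |k| / 2 * (|qfun c x| * ‖u x‖) := by
  simp [scatteringDensity, norm_planeWave]

theorem integrable_scatteringDensity (hq : Integrable (qfun c)) (hu : Continuous u) {M : ℝ}
    (hM : ∀ x, ‖u x‖ ≤ M) (k : ℝ) : Integrable (scatteringDensity c k u) :=
  ((hq.ofReal.mul_bdd hu.aestronglyMeasurable (.of_forall hM)).bdd_mul
    (continuous_planeWave (-k)).aestronglyMeasurable
    (.of_forall fun x ↦ (norm_planeWave (-k) x).le)).const_mul _

theorem integral_norm_scatteringDensity_le (hq : Integrable (qfun c)) (hu : Continuous u) {M : ℝ}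
    (hM : ∀ x, ‖u x‖ ≤ M) (k : ℝ) :
    ∫ x, ‖scatteringDensity c k u x‖ ≤ |k| / 2 * ((∫ x, |qfun c x|) * M) := by
  rw [← integral_mul_const, ← integral_const_mul]
  refine integral_mono (integrable_scatteringDensity hq hu hM k).norm
    ((hq.abs.mul_const M).const_mul _) fun x ↦ ?_
  rw [norm_scatteringDensity]
  gcongr
  exact hM x

end WaveAmplitude

section Scattering

/-- The scattering state that is normalized to `e^{ikx}` at `+∞`; it looks like
`t e^{ikx} + r e^{-ikx}` at `-∞`. In the usual notation `t = 1 / T` and `r = R₂ / T`. -/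
structure IsScatteringSolution (c : ℝ → ℝ) (k : ℝ) (t r : ℂ) (u : ℝ → ℂ) : Prop where
  solvesHelmholtz : SolvesHelmholtz c k u
  waves_atTop : HasWaveAsymptotics k 1 0 u atTop
  waves_atBot : HasWaveAsymptotics k t r u atBot

theorem IsJostPlus.isScatteringSolution {c : ℝ → ℝ} {k : ℝ} {T R : ℂ} {u v : ℝ → ℂ}
    (hu : IsJostPlus c k u) (hv : IsJostMinus c k v)
    (hrel : ∀ x, u x = R / T * v x + 1 / T * conj (v x)) :
    IsScatteringSolution c k (1 / T) (R / T) u where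
  solvesHelmholtz := hu.1
  waves_atTop := hu.hasWaveAsymptotics
  waves_atBot := by
    rw [funext hrel]
    simpa using (hv.hasWaveAsymptotics.const_mul (R / T)).add
      (hv.hasWaveAsymptotics.star.const_mul (1 / T))

namespace IsScatteringSolution

variable {c : ℝ → ℝ} {k : ℝ} {t r : ℂ} {u : ℝ → ℂ}

theorem integrable_scatteringDensity (h : IsScatteringSolution c k t r u)
    (hq : Integrable (qfun c)) (κ : ℝ) : Integrable (scatteringDensity c κ u) := by
  have hcont := h.solvesHelmholtz.1.continuous
  obtain ⟨M, hM⟩ := h.waves_atTop.exists_norm_le hcont h.waves_atBot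
  exact _root_.integrable_scatteringDensity hq hcont hM κ

theorem tendsto_waveAmplitude_atTop (h : IsScatteringSolution c k t r u) (hk : k ≠ 0)
    (hq : Integrable (qfun c)) :
    Tendsto (waveAmplitude k u) atTop (𝓝 1) ∧ Tendsto (waveAmplitude (-k) u) atTop (𝓝 0) :=
  h.waves_atTop.tendsto_waveAmplitude hk (tendsto_atTop_add_const_right _ · tendsto_id)
    ((h.solvesHelmholtz.isIndefiniteIntegral_waveAmplitude hk hq).tendsto_atTop
      (h.integrable_scatteringDensity hq k) 0)
    ((h.solvesHelmholtz.neg.isIndefiniteIntegral_waveAmplitude (neg_ne_zero.2 hk) hq).tendsto_atTop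
      (h.integrable_scatteringDensity hq (-k)) 0)

theorem tendsto_waveAmplitude_atBot (h : IsScatteringSolution c k t r u) (hk : k ≠ 0)
    (hq : Integrable (qfun c)) :
    Tendsto (waveAmplitude k u) atBot (𝓝 t) ∧ Tendsto (waveAmplitude (-k) u) atBot (𝓝 r) :=
  h.waves_atBot.tendsto_waveAmplitude hk (tendsto_atBot_add_const_right _ · tendsto_id)
    ((h.solvesHelmholtz.isIndefiniteIntegral_waveAmplitude hk hq).tendsto_atBot
      (h.integrable_scatteringDensity hq k) 0)
    ((h.solvesHelmholtz.neg.isIndefiniteIntegral_waveAmplitude (neg_ne_zero.2 hk) hq).tendsto_atBot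
      (h.integrable_scatteringDensity hq (-k)) 0)

theorem sq_norm_transmission_sub_sq_norm_reflection (h : IsScatteringSolution c k t r u)
    (hk : k ≠ 0) (hq : Integrable (qfun c)) : ‖t‖ ^ 2 - ‖r‖ ^ 2 = 1 := by
  have hflux (x : ℝ) : ‖waveAmplitude k u x‖ ^ 2 - ‖waveAmplitude (-k) u x‖ ^ 2 =
      (deriv u 0 * conj (u 0)).im / k := by
    rw [sq_norm_waveAmplitude_sub hk, h.solvesHelmholtz.im_deriv_mul_conj_eq hq x 0]
  have htop := h.tendsto_waveAmplitude_atTop hk hq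
  have hbot := h.tendsto_waveAmplitude_atBot hk hq
  have hplus := (htop.1.norm.pow 2).sub (htop.2.norm.pow 2)
  have hminus := (hbot.1.norm.pow 2).sub (hbot.2.norm.pow 2)
  simp only [hflux, norm_one, norm_zero] at hplus hminus
  linarith [tendsto_nhds_unique hplus tendsto_const_nhds,
    tendsto_nhds_unique hminus tendsto_const_nhds]

theorem one_le_norm_transmission (h : IsScatteringSolution c k t r u) (hk : k ≠ 0)
    (hq : Integrable (qfun c)) : 1 ≤ ‖t‖ := by
  nlinarith [h.sq_norm_transmission_sub_sq_norm_reflection hk hq, norm_nonneg t, sq_nonneg ‖r‖]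

theorem norm_reflection_le_norm_transmission (h : IsScatteringSolution c k t r u) (hk : k ≠ 0)
    (hq : Integrable (qfun c)) : ‖r‖ ≤ ‖t‖ :=
  (sq_le_sq₀ (norm_nonneg r) (norm_nonneg t)).1
    (by linarith [h.sq_norm_transmission_sub_sq_norm_reflection hk hq])

theorem one_sub_transmission_eq (h : IsScatteringSolution c k t r u) (hk : k ≠ 0)
    (hq : Integrable (qfun c)) : 1 - t = ∫ x, scatteringDensity c k u x :=
  (h.solvesHelmholtz.isIndefiniteIntegral_waveAmplitude hk hq).sub_eq_integral_of_tendsto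
    (h.integrable_scatteringDensity hq k) (h.tendsto_waveAmplitude_atBot hk hq).1
    (h.tendsto_waveAmplitude_atTop hk hq).1

theorem neg_reflection_eq (h : IsScatteringSolution c k t r u) (hk : k ≠ 0)
    (hq : Integrable (qfun c)) : -r = ∫ x, scatteringDensity c (-k) u x := by
  rw [← zero_sub]
  exact (h.solvesHelmholtz.neg.isIndefiniteIntegral_waveAmplitude (neg_ne_zero.2 hk)
    hq).sub_eq_integral_of_tendsto (h.integrable_scatteringDensity hq (-k))
    (h.tendsto_waveAmplitude_atBot hk hq).2 (h.tendsto_waveAmplitude_atTop hk hq).2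

theorem norm_sub_planeWave_le (h : IsScatteringSolution c k t r u) (hk : k ≠ 0)
    (hq : Integrable (qfun c)) {M : ℝ} (hM : ∀ x, ‖u x‖ ≤ M) (x : ℝ) :
    ‖u x - planeWave k x‖ ≤ |k| * ((∫ x, |qfun c x|) * M) := by
  have hu := h.solvesHelmholtz
  have hlim := h.tendsto_waveAmplitude_atTop hk hq
  have hint := integral_norm_scatteringDensity_le hq hu.1.continuous hM
  have hplus := (hu.isIndefiniteIntegral_waveAmplitude hk hq).norm_sub_le_integral_norm
    (h.integrable_scatteringDensity hq k) hlim.1 x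
  have hminus := (hu.neg.isIndefiniteIntegral_waveAmplitude (neg_ne_zero.2 hk)
    hq).norm_sub_le_integral_norm (h.integrable_scatteringDensity hq (-k)) hlim.2 x
  rw [sub_zero] at hminus
  calc ‖u x - planeWave k x‖
      = ‖(waveAmplitude k u x - 1) * planeWave k x +
          waveAmplitude (-k) u x * planeWave (-k) x‖ := by
        rw [sub_one_mul, sub_add_eq_add_sub, waveAmplitude_mul_add hk]
    _ ≤ ‖waveAmplitude k u x - 1‖ + ‖waveAmplitude (-k) u x‖ :=
        (norm_add_le _ _).trans_eq (by simp only [norm_mul, norm_planeWave, mul_one])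
    _ ≤ |k| / 2 * ((∫ x, |qfun c x|) * M) + |-k| / 2 * ((∫ x, |qfun c x|) * M) :=
        add_le_add (hplus.trans (hint k)) (hminus.trans (hint (-k)))
    _ = |k| * ((∫ x, |qfun c x|) * M) := by rw [abs_neg]; ring

theorem norm_le_two (h : IsScatteringSolution c k t r u) (hk : k ≠ 0) (hq : Integrable (qfun c))
    (hkq : |k| * ∫ x, |qfun c x| ≤ 1 / 2) (x : ℝ) : ‖u x‖ ≤ 2 := by
  obtain ⟨M, hM⟩ := h.waves_atTop.exists_norm_le h.solvesHelmholtz.1.continuous h.waves_atBot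
  have hle (x : ℝ) : ‖u x‖ ≤ ⨆ y, ‖u y‖ :=
    le_ciSup (f := fun y ↦ ‖u y‖) ⟨M, Set.forall_mem_range.2 hM⟩ x
  have hsup_nonneg : 0 ≤ ⨆ y, ‖u y‖ := (norm_nonneg _).trans (hle 0)
  have hsup : ⨆ y, ‖u y‖ ≤ 1 + 1 / 2 * ⨆ y, ‖u y‖ := ciSup_le fun x ↦ calc
    ‖u x‖ ≤ ‖planeWave k x‖ + ‖u x - planeWave k x‖ := norm_le_norm_add_norm_sub' _ _
    _ ≤ 1 + |k| * ((∫ x, |qfun c x|) * ⨆ y, ‖u y‖) :=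
        add_le_add (norm_planeWave k x).le (h.norm_sub_planeWave_le hk hq hle x)
    _ ≤ 1 + 1 / 2 * ⨆ y, ‖u y‖ := by rw [← mul_assoc]; gcongr
  linarith [hle x]

theorem integral_norm_scatteringDensity_le (h : IsScatteringSolution c k t r u) (hk : k ≠ 0)
    (hq : Integrable (qfun c)) (hkq : |k| * ∫ x, |qfun c x| ≤ 1 / 2) (κ : ℝ) :
    ∫ x, ‖scatteringDensity c κ u x‖ ≤ |κ| * ∫ x, |qfun c x| :=
  (_root_.integral_norm_scatteringDensity_le hq h.solvesHelmholtz.1.continuous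
    (h.norm_le_two hk hq hkq) κ).trans_eq (by ring)

theorem norm_one_sub_transmission_le (h : IsScatteringSolution c k t r u) (hk : k ≠ 0)
    (hq : Integrable (qfun c)) (hkq : |k| * ∫ x, |qfun c x| ≤ 1 / 2) :
    ‖1 - t‖ ≤ |k| * ∫ x, |qfun c x| := by
  rw [h.one_sub_transmission_eq hk hq]
  exact (norm_integral_le_integral_norm _).trans (h.integral_norm_scatteringDensity_le hk hq hkq k)

theorem norm_reflection_le (h : IsScatteringSolution c k t r u) (hk : k ≠ 0)
    (hq : Integrable (qfun c)) (hkq : |k| * ∫ x, |qfun c x| ≤ 1 / 2) :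
    ‖r‖ ≤ |k| * ∫ x, |qfun c x| := by
  rw [← norm_neg, h.neg_reflection_eq hk hq, ← abs_neg]
  exact (norm_integral_le_integral_norm _).trans
    (h.integral_norm_scatteringDensity_le hk hq hkq (-k))

theorem norm_div_le (h : IsScatteringSolution c k t r u) (hk : k ≠ 0) (hq : Integrable (qfun c)) :
    ‖r / t‖ ≤ 2 * (∫ x, |qfun c x|) * |k| := by
  have ht := h.one_le_norm_transmission hk hq
  rw [norm_div]
  rcases le_total (|k| * ∫ x, |qfun c x|) (1 / 2) with hkq | hkq
  · have hr := h.norm_reflection_le hk hq hkq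
    linarith [div_le_self (norm_nonneg r) ht, norm_nonneg r]
  · have hrt := div_le_one_of_le₀ (h.norm_reflection_le_norm_transmission hk hq) (norm_nonneg t)
    linarith

end IsScatteringSolution

section SmallFrequency

variable {c : ℝ → ℝ} {t r : ℝ → ℂ} {u : ℝ → ℝ → ℂ}

theorem tendsto_abs_mul_const_nhdsNE_zero (C : ℝ) : Tendsto (|·| * C) (𝓝[≠] 0) (𝓝 0) := by
  have h : Continuous fun k : ℝ ↦ |k| * C := by fun_prop
  simpa using (h.tendsto 0).mono_left nhdsWithin_le_nhds

theorem eventually_abs_mul_le_half (C : ℝ) : ∀ᶠ k : ℝ in 𝓝[≠] 0, k ≠ 0 ∧ |k| * C ≤ 1 / 2 :=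
  eventually_mem_nhdsWithin.and
    ((tendsto_abs_mul_const_nhdsNE_zero C).eventually_le_const one_half_pos)

theorem tendsto_scatteringSolution (h : ∀ k ≠ 0, IsScatteringSolution c k (t k) (r k) (u k))
    (hq : Integrable (qfun c)) (x : ℝ) : Tendsto (u · x) (𝓝[≠] 0) (𝓝 1) := by
  have hdiff : Tendsto (fun k ↦ u k x - planeWave k x) (𝓝[≠] 0) (𝓝 0) := by
    refine squeeze_zero_norm' ?_ (tendsto_abs_mul_const_nhdsNE_zero ((∫ x, |qfun c x|) * 2))
    filter_upwards [eventually_abs_mul_le_half (∫ x, |qfun c x|)] with k ⟨hk, hkq⟩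
    exact (h k hk).norm_sub_planeWave_le hk hq ((h k hk).norm_le_two hk hq hkq) x
  simpa using hdiff.add (tendsto_planeWave_nhdsNE_zero x)

theorem tendsto_transmission (h : ∀ k ≠ 0, IsScatteringSolution c k (t k) (r k) (u k))
    (hq : Integrable (qfun c)) : Tendsto t (𝓝[≠] 0) (𝓝 1) := by
  suffices hsub : Tendsto (fun k ↦ 1 - t k) (𝓝[≠] 0) (𝓝 0) by simpa using hsub.const_sub 1
  refine squeeze_zero_norm' ?_ (tendsto_abs_mul_const_nhdsNE_zero (∫ x, |qfun c x|))
  filter_upwards [eventually_abs_mul_le_half (∫ x, |qfun c x|)] with k ⟨hk, hkq⟩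
  exact (h k hk).norm_one_sub_transmission_le hk hq hkq

theorem tendsto_integral_planeWave_mul
    (h : ∀ k ≠ 0, IsScatteringSolution c k (t k) (r k) (u k)) (hq : Integrable (qfun c)) :
    Tendsto (fun k ↦ ∫ x, planeWave k x * (qfun c x * u k x)) (𝓝[≠] 0)
      (𝓝 (∫ x, (qfun c x : ℂ))) := by
  have hsmall := eventually_abs_mul_le_half (∫ x, |qfun c x|)
  refine tendsto_integral_filter_of_dominated_convergence (fun x ↦ |qfun c x| * 2) ?_ ?_
    (hq.abs.mul_const 2) (.of_forall fun x ↦ ?_)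
  · filter_upwards [hsmall] with k ⟨hk, _⟩
    exact (continuous_planeWave k).aestronglyMeasurable.mul
      (hq.ofReal.aestronglyMeasurable.mul
        (h k hk).solvesHelmholtz.1.continuous.aestronglyMeasurable)
  · filter_upwards [hsmall] with k ⟨hk, hkq⟩
    refine .of_forall fun x ↦ ?_
    rw [norm_mul, norm_planeWave, one_mul, norm_mul, Complex.norm_real, Real.norm_eq_abs]
    gcongr
    exact (h k hk).norm_le_two hk hq hkq x
  · simpa using (tendsto_planeWave_nhdsNE_zero x).mul
      ((tendsto_scatteringSolution h hq x).const_mul (qfun c x : ℂ))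

theorem tendsto_reflection_div (h : ∀ k ≠ 0, IsScatteringSolution c k (t k) (r k) (u k))
    (hq : Integrable (qfun c)) :
    Tendsto (fun k ↦ r k / k) (𝓝[≠] 0) (𝓝 (1 / (2 * Complex.I) * ∫ x, (qfun c x : ℂ))) := by
  refine ((tendsto_integral_planeWave_mul h hq).const_mul _).congr' ?_
  filter_upwards [self_mem_nhdsWithin] with k hk
  have hkℂ : (k : ℂ) ≠ 0 := by exact_mod_cast hk
  have hr := (h k hk).neg_reflection_eq hk hq
  simp only [scatteringDensity, neg_neg, integral_const_mul] at hr
  rw [eq_div_iff hkℂ, ← neg_neg (r k), hr]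
  push_cast
  ring

end SmallFrequency

end Scattering

theorem integrable_qfun {c : ℝ → ℝ} (hmeas : Measurable c) (h1 : HypH1 c) (h2 : HypH2 c) :
    Integrable (qfun c) := by
  obtain ⟨c₀, hc₀, cM, hcM, hc⟩ := h1
  obtain ⟨C, -, δ, hδ, hdecay⟩ := h2
  have hmajorant : Integrable fun x : ℝ ↦ (1 + ‖x‖ ^ 2) ^ (-(1 + δ) / 2) :=
    integrable_rpow_neg_one_add_norm_sq (by simp [hδ])
  have hqmeas : Measurable (qfun c) := by unfold qfun; fun_prop
  refine (hmajorant.const_mul ((cM + 1) / c₀ ^ 2 * C)).mono' hqmeas.aestronglyMeasurable ?_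
  filter_upwards [hc, hdecay] with x ⟨hlower, hupper⟩ hx
  have hpos : 0 < c x := hc₀.trans hlower
  have hfactor : qfun c x = (c x + 1) / c x ^ 2 * (c x - 1) := by
    rw [qfun]
    field_simp
    ring
  rw [hfactor, norm_mul, Real.norm_of_nonneg (by positivity), mul_assoc, Real.norm_eq_abs,
    Real.norm_eq_abs, sq_abs]
  gcongr

theorem reflection_small_k_general (c : ℝ → ℝ) (hq : Integrable (qfun c))
    (U₁ U₂ : ℝ → ℝ → ℂ) (T R₂ : ℝ → ℂ)
    (hU₁ : ∀ k : ℝ, k ≠ 0 → IsJostPlus c k (U₁ k))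
    (hU₂ : ∀ k : ℝ, k ≠ 0 → IsJostMinus c k (U₂ k))
    (hrel₂ : ∀ k : ℝ, k ≠ 0 → ∀ x : ℝ,
      U₁ k x = R₂ k / T k * U₂ k x + 1 / T k * conj (U₂ k x)) :
    (∀ k : ℝ, k ≠ 0 → ‖R₂ k‖ ≤ 2 * (∫ x, |qfun c x|) * |k|) ∧
    Tendsto (fun k : ℝ ↦ R₂ k / k) (𝓝[≠] 0)
      (𝓝 (1 / (2 * Complex.I) * ∫ x, (qfun c x : ℂ))) := by
  have hscat (k : ℝ) (hk : k ≠ 0) :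
      IsScatteringSolution c k (1 / T k) (R₂ k / T k) (U₁ k) :=
    (hU₁ k hk).isScatteringSolution (hU₂ k hk) (hrel₂ k hk)
  have hquot (k : ℝ) (hk : k ≠ 0) : R₂ k / T k / (1 / T k) = R₂ k := by
    have hT : T k ≠ 0 := fun hT ↦ by
      simpa [hT, zero_lt_one.not_ge] using (hscat k hk).one_le_norm_transmission hk hq
    rw [div_div_div_cancel_right₀ hT, div_one]
  refine ⟨fun k hk ↦ hquot k hk ▸ (hscat k hk).norm_div_le hk hq, ?_⟩
  have hlim := (tendsto_reflection_div hscat hq).div (tendsto_transmission hscat hq) one_ne_zero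
  rw [div_one] at hlim
  refine hlim.congr' ?_
  filter_upwards [self_mem_nhdsWithin] with k hk
  rw [Pi.div_apply, div_right_comm, hquot k hk]

/-- Small-`k` behaviour of the reflection coefficient: `|R₂(k)| ≤ C'|k|` and
`R₂(k)/k → (1/2i) ∫ q` as `k → 0`. -/
theorem reflection_small_k (c : ℝ → ℝ) (hmeas : Measurable c)
    (h1 : HypH1 c) (h2 : HypH2 c)
    (U₁ U₂ : ℝ → ℝ → ℂ) (T R₁ R₂ : ℝ → ℂ)
    (hU₁ : ∀ k : ℝ, k ≠ 0 → IsJostPlus c (k : ℂ) (U₁ k))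
    (hU₂ : ∀ k : ℝ, k ≠ 0 → IsJostMinus c (k : ℂ) (U₂ k))
    (hT : ∀ k : ℝ, k ≠ 0 → T k ≠ 0)
    (hrel₁ : ∀ k : ℝ, k ≠ 0 → ∀ x : ℝ,
      U₂ k x = (R₁ k / T k) * U₁ k x + (1 / T k) * (starRingEnd ℂ) (U₁ k x))
    (hrel₂ : ∀ k : ℝ, k ≠ 0 → ∀ x : ℝ,
      U₁ k x = (R₂ k / T k) * U₂ k x + (1 / T k) * (starRingEnd ℂ) (U₂ k x)) :
    (∃ C' > (0 : ℝ), ∀ k : ℝ, k ≠ 0 → ‖R₂ k‖ ≤ C' * |k|) ∧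
    Tendsto (fun k : ℝ => R₂ k / (k : ℂ)) (𝓝[≠] (0 : ℝ))
      (𝓝 ((1 / (2 * Complex.I)) * ∫ t : ℝ, ((qfun c t : ℝ) : ℂ))) := by
  have hq := integrable_qfun hmeas h1 h2
  have ⟨hbound, hlim⟩ := reflection_small_k_general c hq U₁ U₂ T R₂ hU₁ hU₂ hrel₂
  refine ⟨⟨2 * (∫ x, |qfun c x|) + 1, by positivity, fun k hk ↦ (hbound k hk).trans ?_⟩, hlim⟩
  gcongr
  exact (lt_add_one _).le
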